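/- arXiv:1902.07970 — 5 statements merged into one kernel-verified Lean document; each statement's English description precedes it below -/
import Mathlib

section
/- Let n ≥ 1, N = 2n+1, let a_0, a_1, …, a_n, b_1, …, b_n be real numbers, and let T_n(t) = a_0/2 + Σ_{k=1}^n (a_k cos kt + b_k sin kt). Let (v_k)_{k≥1} be a sequence of real numbers with Σ_{k=1}^∞ |v_k| < ∞, and for 1 ≤ k ≤ n define C_k(t) = v_k cos kt + Σ_{m=1}^∞ [v_{mN+k} cos((mN+k)t) + v_{mN−k} cos((mN−k)t)], S_k(t) = v_k sin kt + Σ_{m=1}^∞ [v_{mN+k} sin((mN+k)t) − v_{mN−k} sin((mN−k)t)], and H_k = v_k + Σ_{m=1}^∞ [v_{mN+k} + v_{mN−k}]. If H_k ≠ 0 for every k = 1, …, n, then the function ST(t) = a_0/2 + Σ_{k=1}^n H_k^{−1} [a_k C_k(t) + b_k S_k(t)] satisfies ST(t_i) = T_n(t_i) at every node t_i = 2π(i−1)/N, i = 1, …, N. -/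
open Real Finset

/-- Theorem 1 of the paper (sufficiency, grid `Δ_N^{(0)}`): with the normalizing
multipliers `H k = v k + Σ_{m≥1} (v (mN+k) + v (mN-k))`, assumed nonzero, the
trigonometric spline `ST` interpolates the trigonometric polynomial `T` at the
nodes `t i = 2π(i-1)/N`, `i = 1, …, N`, `N = 2n+1`. -/
theorem spline_interpolates_poly_grid0
    (n N : ℕ) (hn : 1 ≤ n) (hN : N = 2 * n + 1)
    (a0 : ℝ) (a b : ℕ → ℝ)
    (T : ℝ → ℝ)
    (hT : ∀ x, T x = a0 / 2 +
      ∑ k ∈ Finset.Icc 1 n, (a k * Real.cos ((k : ℝ) * x) + b k * Real.sin ((k : ℝ) * x)))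
    (v : ℕ → ℝ) (hv : Summable fun k => |v k|)
    (C S : ℕ → ℝ → ℝ) (H : ℕ → ℝ)
    (hC : ∀ k, 1 ≤ k → k ≤ n → ∀ x, C k x = v k * Real.cos ((k : ℝ) * x) +
      ∑' m : ℕ, (v ((m + 1) * N + k) * Real.cos ((((m + 1) * N + k : ℕ) : ℝ) * x) +
        v ((m + 1) * N - k) * Real.cos ((((m + 1) * N - k : ℕ) : ℝ) * x)))
    (hS : ∀ k, 1 ≤ k → k ≤ n → ∀ x, S k x = v k * Real.sin ((k : ℝ) * x) +
      ∑' m : ℕ, (v ((m + 1) * N + k) * Real.sin ((((m + 1) * N + k : ℕ) : ℝ) * x) -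
        v ((m + 1) * N - k) * Real.sin ((((m + 1) * N - k : ℕ) : ℝ) * x)))
    (hH : ∀ k, 1 ≤ k → k ≤ n →
      H k = v k + ∑' m : ℕ, (v ((m + 1) * N + k) + v ((m + 1) * N - k)))
    (hHne : ∀ k, 1 ≤ k → k ≤ n → H k ≠ 0)
    (ST : ℝ → ℝ)
    (hST : ∀ x, ST x = a0 / 2 +
      ∑ k ∈ Finset.Icc 1 n, (H k)⁻¹ * (a k * C k x + b k * S k x))
    (t : ℕ → ℝ) (ht : ∀ i, t i = 2 * π * ((i : ℝ) - 1) / N) :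
    ∀ i ∈ Finset.Icc 1 N, ST (t i) = T (t i) := by
  intro i hi
  rw [hST, hT]
  congr 1
  apply Finset.sum_congr rfl
  intro k hk
  obtain ⟨h1, h2⟩ := Finset.mem_Icc.mp hk
  have hN0 : (N : ℝ) ≠ 0 := by
    rw [hN]; positivity
  have hper : ∀ m : ℕ, (((m + 1) * N : ℕ) : ℝ) * t i
      = (((m + 1 : ℤ) * ((i : ℤ) - 1) : ℤ) : ℝ) * (2 * π) := by
    intro m
    rw [ht]
    push_cast
    field_simp
  have hle : ∀ m : ℕ, k ≤ (m + 1) * N := by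
    intro m
    have : 1 * N ≤ (m + 1) * N := Nat.mul_le_mul_right N (by omega)
    omega
  have e1 : ∀ m : ℕ, (((m + 1) * N + k : ℕ) : ℝ) * t i
      = (k : ℝ) * t i + (((m + 1 : ℤ) * ((i : ℤ) - 1) : ℤ) : ℝ) * (2 * π) := by
    intro m
    rw [← hper m, Nat.cast_add]; ring
  have e2 : ∀ m : ℕ, (((m + 1) * N - k : ℕ) : ℝ) * t i
      = (((m + 1 : ℤ) * ((i : ℤ) - 1) : ℤ) : ℝ) * (2 * π) - (k : ℝ) * t i := by
    intro m
    rw [← hper m, Nat.cast_sub (hle m)]; ring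
  have hc : C k (t i) = H k * Real.cos ((k : ℝ) * t i) := by
    rw [hC k h1 h2, hH k h1 h2, add_mul, ← tsum_mul_right]
    congr 1
    apply tsum_congr
    intro m
    rw [e1 m, e2 m, Real.cos_add_int_mul_two_pi, Real.cos_int_mul_two_pi_sub]
    ring
  have hs : S k (t i) = H k * Real.sin ((k : ℝ) * t i) := by
    rw [hS k h1 h2, hH k h1 h2, add_mul, ← tsum_mul_right]
    congr 1
    apply tsum_congr
    intro m
    rw [e1 m, e2 m, Real.sin_add_int_mul_two_pi, Real.sin_int_mul_two_pi_sub]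
    ring
  have h0 := hHne k h1 h2
  rw [hc, hs]
  field_simp
end

section
/- Let n ≥ 1, N = 2n+1, let a_0, a_1, …, a_n, b_1, …, b_n be real numbers, and let T_n(t) = a_0/2 + Σ_{k=1}^n (a_k cos kt + b_k sin kt). Let (v_k)_{k≥1} be a sequence of real numbers with Σ_{k=1}^∞ |v_k| < ∞, and for 1 ≤ k ≤ n define C_k(t) = v_k cos kt + Σ_{m=1}^∞ [v_{mN+k} cos((mN+k)t) + v_{mN−k} cos((mN−k)t)], S_k(t) = v_k sin kt + Σ_{m=1}^∞ [v_{mN+k} sin((mN+k)t) − v_{mN−k} sin((mN−k)t)], and H_k = v_k + Σ_{m=1}^∞ (−1)^m [v_{mN+k} + v_{mN−k}]. If H_k ≠ 0 for every k = 1, …, n, then the function ST(t) = a_0/2 + Σ_{k=1}^n H_k^{−1} [a_k C_k(t) + b_k S_k(t)] satisfies ST(t_i) = T_n(t_i) at every node t_i = π(2i−1)/N, i = 1, …, N. -/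
open Real Finset

/-- Theorem 1 of the paper (sufficiency, grid `Δ_N^{(1)}`): with the normalizing
multipliers `H k = v k + Σ_{m≥1} (-1)^m (v (mN+k) + v (mN-k))`, assumed nonzero, the
trigonometric spline `ST` interpolates the trigonometric polynomial `T` at the
nodes `t i = π(2i-1)/N`, `i = 1, …, N`, `N = 2n+1`. -/
theorem spline_interpolates_poly_grid1
    (n N : ℕ) (hn : 1 ≤ n) (hN : N = 2 * n + 1)
    (a0 : ℝ) (a b : ℕ → ℝ)
    (T : ℝ → ℝ)
    (hT : ∀ x, T x = a0 / 2 +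
      ∑ k ∈ Finset.Icc 1 n, (a k * Real.cos ((k : ℝ) * x) + b k * Real.sin ((k : ℝ) * x)))
    (v : ℕ → ℝ) (hv : Summable fun k => |v k|)
    (C S : ℕ → ℝ → ℝ) (H : ℕ → ℝ)
    (hC : ∀ k, 1 ≤ k → k ≤ n → ∀ x, C k x = v k * Real.cos ((k : ℝ) * x) +
      ∑' m : ℕ, (v ((m + 1) * N + k) * Real.cos ((((m + 1) * N + k : ℕ) : ℝ) * x) +
        v ((m + 1) * N - k) * Real.cos ((((m + 1) * N - k : ℕ) : ℝ) * x)))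
    (hS : ∀ k, 1 ≤ k → k ≤ n → ∀ x, S k x = v k * Real.sin ((k : ℝ) * x) +
      ∑' m : ℕ, (v ((m + 1) * N + k) * Real.sin ((((m + 1) * N + k : ℕ) : ℝ) * x) -
        v ((m + 1) * N - k) * Real.sin ((((m + 1) * N - k : ℕ) : ℝ) * x)))
    (hH : ∀ k, 1 ≤ k → k ≤ n →
      H k = v k + ∑' m : ℕ, (-1 : ℝ) ^ (m + 1) * (v ((m + 1) * N + k) + v ((m + 1) * N - k)))
    (hHne : ∀ k, 1 ≤ k → k ≤ n → H k ≠ 0)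
    (ST : ℝ → ℝ)
    (hST : ∀ x, ST x = a0 / 2 +
      ∑ k ∈ Finset.Icc 1 n, (H k)⁻¹ * (a k * C k x + b k * S k x))
    (t : ℕ → ℝ) (ht : ∀ i, t i = π * (2 * (i : ℝ) - 1) / N) :
    ∀ i ∈ Finset.Icc 1 N, ST (t i) = T (t i) := by
  intro i hi
  obtain ⟨hi1, -⟩ := Finset.mem_Icc.mp hi
  obtain ⟨j, rfl⟩ : ∃ j, i = j + 1 := ⟨i - 1, by omega⟩
  have hNpos : (N : ℝ) ≠ 0 := by
    have : N ≠ 0 := by omega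
    exact_mod_cast this
  set x := t (j + 1) with hx
  have hNx : (N : ℝ) * x = ((2 * j + 1 : ℕ) : ℝ) * π := by
    rw [hx, ht]
    push_cast
    field_simp
    ring
  have hsgn : ∀ m : ℕ, (-1 : ℝ) ^ ((m + 1) * (2 * j + 1)) = (-1) ^ (m + 1) := by
    intro m
    rw [mul_comm, pow_mul]
    congr 1
    exact Odd.neg_one_pow ⟨j, rfl⟩
  have hplus : ∀ m k : ℕ, ((((m + 1) * N + k : ℕ) : ℝ) * x) =
      (k : ℝ) * x + (((m + 1) * (2 * j + 1) : ℕ) : ℝ) * π := by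
    intro m k
    push_cast at hNx ⊢
    linear_combination ((m : ℝ) + 1) * hNx
  have hminus : ∀ m k : ℕ, k ≤ n → ((((m + 1) * N - k : ℕ) : ℝ) * x) =
      (((m + 1) * (2 * j + 1) : ℕ) : ℝ) * π - (k : ℝ) * x := by
    intro m k hk
    have hle : k ≤ (m + 1) * N := by nlinarith [Nat.zero_le (m * N)]
    rw [Nat.cast_sub hle]
    push_cast at hNx ⊢
    linear_combination ((m : ℝ) + 1) * hNx
  have hCk : ∀ k, 1 ≤ k → k ≤ n → C k x = H k * Real.cos ((k : ℝ) * x) := by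
    intro k h1 h2
    rw [hC k h1 h2, hH k h1 h2, add_mul, ← tsum_mul_right]
    congr 1
    refine tsum_congr fun m => ?_
    rw [hplus, hminus m k h2, Real.cos_add_nat_mul_pi, Real.cos_nat_mul_pi_sub, hsgn]
    ring
  have hSk : ∀ k, 1 ≤ k → k ≤ n → S k x = H k * Real.sin ((k : ℝ) * x) := by
    intro k h1 h2
    rw [hS k h1 h2, hH k h1 h2, add_mul, ← tsum_mul_right]
    congr 1
    refine tsum_congr fun m => ?_
    rw [hplus, hminus m k h2, Real.sin_add_nat_mul_pi, Real.sin_nat_mul_pi_sub, hsgn]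
    ring
  rw [hST, hT]
  congr 1
  refine Finset.sum_congr rfl fun k hk => ?_
  obtain ⟨h1, h2⟩ := Finset.mem_Icc.mp hk
  rw [hCk k h1 h2, hSk k h1 h2]
  have := hHne k h1 h2
  field_simp
end

section
/- Let n ≥ 1, N = 2n+1, let r ≥ 1 be a natural number, and let a_0, …, a_n, b_1, …, b_n be real numbers. Write sinc x = sin x / x, v2_j(r) = |sinc(πj/N)|^{1+r}, and v3_j(r) = j^{−(1+r)}. For a convergence-factor sequence v, define for 1 ≤ k ≤ n: C_k(v,t) = v_k cos kt + Σ_{m=1}^∞ [v_{mN+k} cos((mN+k)t) + v_{mN−k} cos((mN−k)t)], S_k(v,t) = v_k sin kt + Σ_{m=1}^∞ [v_{mN+k} sin((mN+k)t) − v_{mN−k} sin((mN−k)t)], H_k(v) = v_k + Σ_{m=1}^∞ [v_{mN+k} + v_{mN−k}], and ST(v,t) = a_0/2 + Σ_{k=1}^n H_k(v)^{−1}[a_k C_k(v,t) + b_k S_k(v,t)]. Then ST(v2, t) = ST(v3, t) for every real t; i.e., the trigonometric splines built with factors v2 and v3 on the grid Δ_N^{(0)} coincide for every natural r. -/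
open Real Finset

/-- The trigonometric splines on the grid `Δ_N^{(0)}` built with the sinc-type convergence
factors `v2 j = |sinc(πj/N)|^{1+r}` and with the power-type factors `v3 j = j^{-(1+r)}`
coincide for every real `t` and every natural `r ≥ 1`. -/
theorem spline_v2_eq_spline_v3_grid0
    (n N r : ℕ) (hn : 1 ≤ n) (hN : N = 2 * n + 1) (hr : 1 ≤ r)
    (a0 : ℝ) (a b : ℕ → ℝ)
    (v2 v3 : ℕ → ℝ)
    (hv2 : ∀ j, v2 j = |Real.sin (π * j / N) / (π * j / N)| ^ (1 + r))
    (hv3 : ∀ j, v3 j = (((j : ℝ)) ^ (1 + r))⁻¹)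
    (C S : (ℕ → ℝ) → ℕ → ℝ → ℝ) (H : (ℕ → ℝ) → ℕ → ℝ)
    (hC : ∀ (v : ℕ → ℝ) (k : ℕ) (x : ℝ), C v k x = v k * Real.cos ((k : ℝ) * x) +
      ∑' m : ℕ, (v ((m + 1) * N + k) * Real.cos ((((m + 1) * N + k : ℕ) : ℝ) * x) +
        v ((m + 1) * N - k) * Real.cos ((((m + 1) * N - k : ℕ) : ℝ) * x)))
    (hS : ∀ (v : ℕ → ℝ) (k : ℕ) (x : ℝ), S v k x = v k * Real.sin ((k : ℝ) * x) +
      ∑' m : ℕ, (v ((m + 1) * N + k) * Real.sin ((((m + 1) * N + k : ℕ) : ℝ) * x) -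
        v ((m + 1) * N - k) * Real.sin ((((m + 1) * N - k : ℕ) : ℝ) * x)))
    (hH : ∀ (v : ℕ → ℝ) (k : ℕ),
      H v k = v k + ∑' m : ℕ, (v ((m + 1) * N + k) + v ((m + 1) * N - k)))
    (ST : (ℕ → ℝ) → ℝ → ℝ)
    (hST : ∀ (v : ℕ → ℝ) (x : ℝ), ST v x = a0 / 2 +
      ∑ k ∈ Finset.Icc 1 n, (H v k)⁻¹ * (a k * C v k x + b k * S v k x)) :
    ∀ x : ℝ, ST v2 x = ST v3 x := by
  intro x
  rw [hST, hST]
  congr 1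
  refine Finset.sum_congr rfl fun k hk => ?_
  obtain ⟨hk1, hkn⟩ := Finset.mem_Icc.mp hk
  have hN0 : (0 : ℝ) < N := by
    have : 0 < N := by omega
    exact_mod_cast this
  have hk0 : (0 : ℝ) < k := by exact_mod_cast hk1
  have hkN : (k : ℝ) < N := by
    have : k < N := by omega
    exact_mod_cast this
  have hpi := Real.pi_pos
  have hsin : 0 < Real.sin (π * k / N) := by
    apply Real.sin_pos_of_pos_of_lt_pi
    · positivity
    · rw [div_lt_iff₀ hN0]
      exact mul_lt_mul_of_pos_left hkN hpi
  obtain ⟨c, hc⟩ : ∃ c : ℝ, c = (N / π * |Real.sin (π * k / N)|) ^ (1 + r) := ⟨_, rfl⟩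
  have hc0 : c ≠ 0 := by
    rw [hc]
    have := abs_pos.mpr hsin.ne'
    positivity
  have key : ∀ j : ℕ, |Real.sin (π * j / N)| = |Real.sin (π * k / N)| →
      v2 j = c * v3 j := by
    intro j hj
    rw [hv2, hv3, hc, abs_div, hj, ← inv_pow, ← mul_pow]
    congr 1
    have hnn : (0 : ℝ) ≤ π * j / N := by positivity
    rw [abs_of_nonneg hnn]
    generalize |Real.sin (π * k / N)| = s
    simp only [div_eq_mul_inv, mul_inv, inv_inv]
    ring
  have h0 : v2 k = c * v3 k := key k rfl
  have hp : ∀ m : ℕ, v2 ((m + 1) * N + k) = c * v3 ((m + 1) * N + k) := by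
    intro m
    apply key
    have : π * (((m + 1) * N + k : ℕ) : ℝ) / N = π * k / N + ((m + 1 : ℕ) : ℝ) * π := by
      push_cast
      field_simp
      ring
    rw [this, Real.sin_add_nat_mul_pi, abs_mul, abs_pow, abs_neg, abs_one, one_pow, one_mul]
  have hm : ∀ m : ℕ, v2 ((m + 1) * N - k) = c * v3 ((m + 1) * N - k) := by
    intro m
    apply key
    have hle : k ≤ (m + 1) * N := by nlinarith
    have : π * (((m + 1) * N - k : ℕ) : ℝ) / N = ((m + 1 : ℕ) : ℝ) * π - π * k / N := by
      rw [Nat.cast_sub hle]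
      push_cast
      field_simp
    rw [this, Real.sin_nat_mul_pi_sub, abs_neg, abs_mul, abs_pow, abs_neg, abs_one, one_pow,
      one_mul]
  have eH : H v2 k = c * H v3 k := by
    rw [hH, hH, h0, mul_add, ← tsum_mul_left]
    congr 1
    refine tsum_congr fun m => ?_
    rw [hp, hm]
    ring
  have eC : C v2 k x = c * C v3 k x := by
    rw [hC, hC, h0, mul_add, ← tsum_mul_left, mul_assoc]
    congr 1
    refine tsum_congr fun m => ?_
    rw [hp, hm]
    ring
  have eS : S v2 k x = c * S v3 k x := by
    rw [hS, hS, h0, mul_add, ← tsum_mul_left, mul_assoc]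
    congr 1
    refine tsum_congr fun m => ?_
    rw [hp, hm]
    ring
  rw [eH, eC, eS, mul_inv]
  calc c⁻¹ * (H v3 k)⁻¹ * (a k * (c * C v3 k x) + b k * (c * S v3 k x))
      = (c⁻¹ * c) * ((H v3 k)⁻¹ * (a k * C v3 k x + b k * S v3 k x)) := by ring
    _ = _ := by rw [inv_mul_cancel₀ hc0, one_mul]
end

section
/- Let n ≥ 1, N = 2n+1, fix k with 1 ≤ k ≤ n and a real number t. For a natural number r ≥ 1 set v_j(r) = j^{−(1+r)} and define C_k(r,t) = v_k(r) cos kt + Σ_{m=1}^∞ [v_{mN+k}(r) cos((mN+k)t) + v_{mN−k}(r) cos((mN−k)t)], S_k(r,t) = v_k(r) sin kt + Σ_{m=1}^∞ [v_{mN+k}(r) sin((mN+k)t) − v_{mN−k}(r) sin((mN−k)t)], and H_k(r) = v_k(r) + Σ_{m=1}^∞ [v_{mN+k}(r) + v_{mN−k}(r)]. Then, as r → ∞ over the natural numbers, C_k(r,t)/H_k(r) → cos kt and S_k(r,t)/H_k(r) → sin kt. -/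
open Real Finset Filter

/-- The aliased tail, relative to the leading coefficient, tends to zero. -/
lemma aliased_tail_tendsto (N k : ℕ) (hk1 : 1 ≤ k) (hN : 2 * k + 1 ≤ N)
    (v : ℕ → ℕ → ℝ) (hv : ∀ r j, v r j = (((j : ℝ)) ^ (1 + r))⁻¹)
    (a b : ℕ → ℝ) (ha : ∀ m, |a m| ≤ 1) (hb : ∀ m, |b m| ≤ 1) :
    Tendsto (fun r : ℕ => (∑' m : ℕ, (v r ((m + 1) * N + k) * a m +
      v r ((m + 1) * N - k) * b m)) / v r k) atTop (nhds 0) := by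
  have hk : (0 : ℝ) < k := by exact_mod_cast hk1
  have hq : ∀ r j, v r j / v r k = ((k : ℝ) / j) ^ (1 + r) := by
    intro r j
    rw [hv, hv, div_pow, div_inv_eq_mul, mul_comm, div_eq_mul_inv]
  have hlow : ∀ m : ℕ, (m + 1) * k < (m + 1) * N - k := by
    intro m
    have h1 : (m + 1) * (2 * k + 1) ≤ (m + 1) * N := Nat.mul_le_mul_left _ hN
    have h2 : (m + 1) * (2 * k + 1) = (m + 1) * k + m * k + k + m + 1 := by ring
    omega
  have hlow' : ∀ m : ℕ, (m + 1) * k < (m + 1) * N + k := by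
    intro m
    have := hlow m
    omega
  have hratio : ∀ m j : ℕ, (m + 1) * k < j →
      0 ≤ (k : ℝ) / j ∧ (k : ℝ) / j < 1 ∧ (k : ℝ) / j ≤ 1 / ((m : ℝ) + 1) := by
    intro m j hj
    have hj' : ((m : ℝ) + 1) * k < j := by exact_mod_cast hj
    have hm : (0 : ℝ) ≤ m := Nat.cast_nonneg m
    have hj0 : (0 : ℝ) < j := lt_of_le_of_lt (by positivity) hj'
    refine ⟨by positivity, ?_, ?_⟩
    · rw [div_lt_one hj0]
      nlinarith
    · rw [div_le_div_iff₀ hj0 (by positivity)]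
      linarith
  have hterm : ∀ m j : ℕ, (m + 1) * k < j → ∀ c : ℝ, |c| ≤ 1 →
      Tendsto (fun r : ℕ => ((k : ℝ) / j) ^ (1 + r) * c) atTop (nhds 0) ∧
      ∀ r : ℕ, 1 ≤ r → |((k : ℝ) / j) ^ (1 + r) * c| ≤ 1 / ((m : ℝ) + 1) ^ 2 := by
    intro m j hj c hc
    obtain ⟨h0, h1, h2⟩ := hratio m j hj
    constructor
    · have h := (tendsto_pow_atTop_nhds_zero_of_lt_one h0 h1).comp (tendsto_add_atTop_nat 1)
      have h' := h.mul_const c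
      rw [zero_mul] at h'
      refine h'.congr fun r => ?_
      simp [add_comm]
    · intro r hr
      rw [abs_mul, abs_of_nonneg (pow_nonneg h0 _)]
      calc ((k : ℝ) / j) ^ (1 + r) * |c| ≤ ((k : ℝ) / j) ^ (1 + r) :=
            mul_le_of_le_one_right (pow_nonneg h0 _) hc
        _ ≤ ((k : ℝ) / j) ^ 2 := pow_le_pow_of_le_one h0 h1.le (by omega)
        _ ≤ (1 / ((m : ℝ) + 1)) ^ 2 := pow_le_pow_left₀ h0 h2 2
        _ = 1 / ((m : ℝ) + 1) ^ 2 := by rw [div_pow, one_pow]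
  have hsum : Summable (fun m : ℕ => 1 / ((m : ℝ) + 1) ^ 2 + 1 / ((m : ℝ) + 1) ^ 2) := by
    have h : Summable (fun m : ℕ => 1 / ((m : ℝ) + 1) ^ 2) := by
      have := (summable_nat_add_iff 1).2 (Real.summable_one_div_nat_pow.2 (one_lt_two))
      simpa using this
    exact h.add h
  have key := tendsto_tsum_of_dominated_convergence (𝓕 := atTop)
    (f := fun (r m : ℕ) => ((k : ℝ) / ((m + 1) * N + k : ℕ)) ^ (1 + r) * a m +
      ((k : ℝ) / ((m + 1) * N - k : ℕ)) ^ (1 + r) * b m) (g := fun _ => (0 : ℝ)) hsum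
    (by
      intro m
      have := (hterm m _ (hlow' m) _ (ha m)).1.add (hterm m _ (hlow m) _ (hb m)).1
      rwa [add_zero] at this)
    (by
      filter_upwards [eventually_ge_atTop 1] with r hr m
      rw [Real.norm_eq_abs]
      exact (abs_add_le _ _).trans (add_le_add ((hterm m _ (hlow' m) _ (ha m)).2 r hr)
        ((hterm m _ (hlow m) _ (hb m)).2 r hr)))
  rw [tsum_zero] at key
  refine key.congr fun r => ?_
  rw [← tsum_div_const]
  refine tsum_congr fun m => ?_
  rw [← hq, ← hq]
  ring

/-- Component limits behind Theorem 2 of the paper: for the power-type factors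
`v r j = j^{-(1+r)}` and fixed `k`, `t`, the normalized aliased kernels converge to the
pure harmonics as the smoothness parameter `r → ∞`:
`C k (r,t) / H k (r) → cos kt` and `S k (r,t) / H k (r) → sin kt`. -/
theorem kernel_quotients_tendsto_r
    (n N : ℕ) (hn : 1 ≤ n) (hN : N = 2 * n + 1)
    (k : ℕ) (hk1 : 1 ≤ k) (hkn : k ≤ n) (t : ℝ)
    (v : ℕ → ℕ → ℝ) (hv : ∀ r j, v r j = (((j : ℝ)) ^ (1 + r))⁻¹)
    (C S H : ℕ → ℝ)
    (hC : ∀ r : ℕ, 1 ≤ r → C r = v r k * Real.cos ((k : ℝ) * t) +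
      ∑' m : ℕ, (v r ((m + 1) * N + k) * Real.cos ((((m + 1) * N + k : ℕ) : ℝ) * t) +
        v r ((m + 1) * N - k) * Real.cos ((((m + 1) * N - k : ℕ) : ℝ) * t)))
    (hS : ∀ r : ℕ, 1 ≤ r → S r = v r k * Real.sin ((k : ℝ) * t) +
      ∑' m : ℕ, (v r ((m + 1) * N + k) * Real.sin ((((m + 1) * N + k : ℕ) : ℝ) * t) -
        v r ((m + 1) * N - k) * Real.sin ((((m + 1) * N - k : ℕ) : ℝ) * t)))
    (hH : ∀ r : ℕ, 1 ≤ r →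
      H r = v r k + ∑' m : ℕ, (v r ((m + 1) * N + k) + v r ((m + 1) * N - k))) :
    Tendsto (fun r : ℕ => C r / H r) atTop (nhds (Real.cos ((k : ℝ) * t))) ∧
    Tendsto (fun r : ℕ => S r / H r) atTop (nhds (Real.sin ((k : ℝ) * t))) := by
  have hvk : ∀ r, v r k ≠ 0 := by
    intro r
    rw [hv]
    have : (0 : ℝ) < k := by exact_mod_cast hk1
    positivity
  have tail := aliased_tail_tendsto N k hk1 (by omega) v hv
  have tH := tail (fun _ => 1) (fun _ => 1) (by simp) (by simp)
  have tC := tail (fun m => Real.cos ((((m + 1) * N + k : ℕ) : ℝ) * t))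
    (fun m => Real.cos ((((m + 1) * N - k : ℕ) : ℝ) * t))
    (fun m => Real.abs_cos_le_one _) (fun m => Real.abs_cos_le_one _)
  have tS := tail (fun m => Real.sin ((((m + 1) * N + k : ℕ) : ℝ) * t))
    (fun m => -Real.sin ((((m + 1) * N - k : ℕ) : ℝ) * t))
    (fun m => Real.abs_sin_le_one _)
    (fun m => by rw [abs_neg]; exact Real.abs_sin_le_one _)
  have fin : ∀ (c : ℝ) (T U : ℕ → ℝ), Tendsto (fun r => T r / v r k) atTop (nhds 0) →
      Tendsto (fun r => U r / v r k) atTop (nhds 0) →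
      Tendsto (fun r => (v r k * c + T r) / (v r k + U r)) atTop (nhds c) := by
    intro c T U hT hU
    have h := (hT.const_add c).div (hU.const_add 1) (by norm_num)
    rw [add_zero, add_zero, div_one] at h
    refine h.congr fun r => ?_
    have e1 : v r k * c + T r = v r k * (c + T r / v r k) := by
      rw [mul_add, mul_div_cancel₀ _ (hvk r)]
    have e2 : v r k + U r = v r k * (1 + U r / v r k) := by
      rw [mul_add, mul_div_cancel₀ _ (hvk r), mul_one]
    rw [e1, e2, mul_div_mul_left _ _ (hvk r)]
    rfl
  constructor
  · refine (fin _ _ _ tC tH).congr' ?_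
    filter_upwards [eventually_ge_atTop 1] with r hr
    rw [hC r hr, hH r hr]
    simp only [mul_one]
  · refine (fin _ _ _ tS tH).congr' ?_
    filter_upwards [eventually_ge_atTop 1] with r hr
    rw [hS r hr, hH r hr]
    simp only [mul_one, mul_neg, ← sub_eq_add_neg]
end

section
/- Let n ≥ 1, N = 2n+1, and let a_0, …, a_n, b_1, …, b_n be real numbers with T_n(t) = a_0/2 + Σ_{k=1}^n (a_k cos kt + b_k sin kt). For a natural number r ≥ 1 set v_j(r) = j^{−(1+r)} and define the trigonometric spline ST(r,t) = a_0/2 + Σ_{k=1}^n H_k(r)^{−1} [a_k C_k(r,t) + b_k S_k(r,t)], where C_k(r,t) = v_k(r) cos kt + Σ_{m=1}^∞ [v_{mN+k}(r) cos((mN+k)t) + v_{mN−k}(r) cos((mN−k)t)], S_k(r,t) = v_k(r) sin kt + Σ_{m=1}^∞ [v_{mN+k}(r) sin((mN+k)t) − v_{mN−k}(r) sin((mN−k)t)], and H_k(r) = v_k(r) + Σ_{m=1}^∞ [v_{mN+k}(r) + v_{mN−k}(r)]. Then for every real t, ST(r,t) → T_n(t) as r → ∞ over the natural numbers. -/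
open Real Finset Filter

lemma aux_term (k j m r : ℕ) (hk : 1 ≤ k) (hj : k * (m + 1) < j) (hr : 1 ≤ r) :
    (k : ℝ) ^ (1 + r) * ((j : ℝ) ^ (1 + r))⁻¹ ≤ 1 / ((m : ℝ) + 1) ^ 2 := by
  have hj' : (k : ℝ) * (m + 1) < j := by exact_mod_cast hj
  have hk' : (1 : ℝ) ≤ k := by exact_mod_cast hk
  have hm : (0 : ℝ) < (m : ℝ) + 1 := by positivity
  have hj0 : (0 : ℝ) < j := lt_trans (by positivity) hj'
  have h1 : (k : ℝ) / j ≤ 1 / ((m : ℝ) + 1) := by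
    rw [div_le_div_iff₀ hj0 hm]; linarith
  have h2 : 1 / ((m : ℝ) + 1) ≤ 1 := by
    rw [div_le_one hm]; linarith [(Nat.cast_nonneg m : (0 : ℝ) ≤ m)]
  rw [← div_eq_mul_inv, ← div_pow]
  calc ((k : ℝ) / j) ^ (1 + r) ≤ ((k : ℝ) / j) ^ 2 :=
        pow_le_pow_of_le_one (by positivity) (h1.trans h2) (by omega)
    _ ≤ (1 / ((m : ℝ) + 1)) ^ 2 := by gcongr
    _ = _ := by rw [div_pow, one_pow]

lemma aux_lim (k j m : ℕ) (hk : 1 ≤ k) (hj : k * (m + 1) < j) (α : ℝ) :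
    Tendsto (fun r : ℕ => (k : ℝ) ^ (1 + r) * (((j : ℝ) ^ (1 + r))⁻¹ * α)) atTop (nhds 0) := by
  have hlt : k < j := lt_of_le_of_lt (Nat.le_mul_of_pos_right k (by omega)) hj
  have hlt' : (k : ℝ) < j := by exact_mod_cast hlt
  have hk' : (1 : ℝ) ≤ k := by exact_mod_cast hk
  have hj0 : (0 : ℝ) < j := by linarith
  have h := (tendsto_pow_atTop_nhds_zero_of_lt_one (r := (k : ℝ) / j) (by positivity)
    ((div_lt_one hj0).2 hlt')).comp (tendsto_add_atTop_nat 1)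
  have h2 := h.mul_const α
  rw [zero_mul] at h2
  refine h2.congr fun r => ?_
  simp only [Function.comp_apply]
  rw [add_comm r 1, div_pow]
  ring

lemma aux_tail (k : ℕ) (hk : 1 ≤ k) (p q : ℕ → ℕ) (hp : ∀ m, k * (m + 1) < p m)
    (hq : ∀ m, k * (m + 1) < q m) (α β : ℕ → ℝ) (hα : ∀ m, |α m| ≤ 1) (hβ : ∀ m, |β m| ≤ 1) :
    Tendsto (fun r : ℕ => (k : ℝ) ^ (1 + r) * ∑' m : ℕ,
      (((p m : ℝ) ^ (1 + r))⁻¹ * α m + ((q m : ℝ) ^ (1 + r))⁻¹ * β m)) atTop (nhds 0) := by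
  have hs : Summable (fun m : ℕ => 2 * (1 / ((m : ℝ) + 1) ^ 2)) := by
    have h := (summable_nat_add_iff 1).2 (Real.summable_one_div_nat_pow.2 one_lt_two)
    refine (Summable.mul_left 2 h).congr fun m => ?_
    push_cast
    rfl
  have key := tendsto_tsum_of_dominated_convergence (𝓕 := atTop)
    (f := fun (r : ℕ) (m : ℕ) => (k : ℝ) ^ (1 + r) *
      (((p m : ℝ) ^ (1 + r))⁻¹ * α m + ((q m : ℝ) ^ (1 + r))⁻¹ * β m))
    (g := fun _ => (0 : ℝ)) hs
    (fun m => by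
      have := (aux_lim k (p m) m hk (hp m) (α m)).add (aux_lim k (q m) m hk (hq m) (β m))
      rw [add_zero] at this
      exact this.congr fun r => by ring)
    (by
      filter_upwards [eventually_ge_atTop 1] with r hr m
      have h1 := aux_term k (p m) m r hk (hp m) hr
      have h2 := aux_term k (q m) m r hk (hq m) hr
      have e1 : |(k : ℝ) ^ (1 + r) * ((p m : ℝ) ^ (1 + r))⁻¹ * α m| ≤ 1 / ((m : ℝ) + 1) ^ 2 := by
        rw [abs_mul, abs_of_nonneg (by positivity)]
        exact (mul_le_of_le_one_right (by positivity) (hα m)).trans h1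
      have e2 : |(k : ℝ) ^ (1 + r) * ((q m : ℝ) ^ (1 + r))⁻¹ * β m| ≤ 1 / ((m : ℝ) + 1) ^ 2 := by
        rw [abs_mul, abs_of_nonneg (by positivity)]
        exact (mul_le_of_le_one_right (by positivity) (hβ m)).trans h2
      rw [Real.norm_eq_abs, mul_add, ← mul_assoc, ← mul_assoc]
      exact (abs_add_le _ _).trans (by linarith))
  rw [tsum_zero] at key
  exact key.congr fun r => tsum_mul_left

/-- Theorem 2 of the paper (grid `Δ_N^{(0)}`, power-type factors `v r j = j^{-(1+r)}`):
for every real `t`, the trigonometric spline `ST r t` converges to the interpolation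
trigonometric polynomial `T t` as the smoothness parameter `r → ∞`. -/
theorem spline_tendsto_poly_r
    (n N : ℕ) (hn : 1 ≤ n) (hN : N = 2 * n + 1)
    (a0 : ℝ) (a b : ℕ → ℝ)
    (T : ℝ → ℝ)
    (hT : ∀ x, T x = a0 / 2 +
      ∑ k ∈ Finset.Icc 1 n, (a k * Real.cos ((k : ℝ) * x) + b k * Real.sin ((k : ℝ) * x)))
    (v : ℕ → ℕ → ℝ) (hv : ∀ r j, v r j = (((j : ℝ)) ^ (1 + r))⁻¹)
    (C S : ℕ → ℕ → ℝ → ℝ) (H : ℕ → ℕ → ℝ)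
    (hC : ∀ (r : ℕ), 1 ≤ r → ∀ (k : ℕ) (x : ℝ),
      C r k x = v r k * Real.cos ((k : ℝ) * x) +
        ∑' m : ℕ, (v r ((m + 1) * N + k) * Real.cos ((((m + 1) * N + k : ℕ) : ℝ) * x) +
          v r ((m + 1) * N - k) * Real.cos ((((m + 1) * N - k : ℕ) : ℝ) * x)))
    (hS : ∀ (r : ℕ), 1 ≤ r → ∀ (k : ℕ) (x : ℝ),
      S r k x = v r k * Real.sin ((k : ℝ) * x) +
        ∑' m : ℕ, (v r ((m + 1) * N + k) * Real.sin ((((m + 1) * N + k : ℕ) : ℝ) * x) -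
          v r ((m + 1) * N - k) * Real.sin ((((m + 1) * N - k : ℕ) : ℝ) * x)))
    (hH : ∀ (r : ℕ), 1 ≤ r → ∀ (k : ℕ),
      H r k = v r k + ∑' m : ℕ, (v r ((m + 1) * N + k) + v r ((m + 1) * N - k)))
    (ST : ℕ → ℝ → ℝ)
    (hST : ∀ (r : ℕ), 1 ≤ r → ∀ (x : ℝ), ST r x = a0 / 2 +
      ∑ k ∈ Finset.Icc 1 n, (H r k)⁻¹ * (a k * C r k x + b k * S r k x)) :
    ∀ x : ℝ, Tendsto (fun r : ℕ => ST r x) atTop (nhds (T x)) := by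
  intro x
  have hk0 : ∀ k ∈ Finset.Icc 1 n, ∀ (r : ℕ), (k : ℝ) ^ (1 + r) ≠ 0 := by
    intro k hk r
    have := (Finset.mem_Icc.1 hk).1
    exact pow_ne_zero _ (by exact_mod_cast (by omega : k ≠ 0))
  have main : ∀ k ∈ Finset.Icc 1 n, ∀ (α β : ℕ → ℝ), (∀ m, |α m| ≤ 1) → (∀ m, |β m| ≤ 1) →
      ∀ c : ℝ, Tendsto (fun r : ℕ => (k : ℝ) ^ (1 + r) * (v r k * c + ∑' m : ℕ,
        (v r ((m + 1) * N + k) * α m + v r ((m + 1) * N - k) * β m))) atTop (nhds c) := by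
    intro k hk α β hα hβ c
    obtain ⟨h1, h2⟩ := Finset.mem_Icc.1 hk
    have hle : ∀ m : ℕ, k * (m + 1) + k < (m + 1) * N := by
      intro m
      rw [hN]
      nlinarith [Nat.mul_le_mul_right (m + 1) h2, Nat.zero_le (n * m)]
    have h := (aux_tail k h1 (fun m => (m + 1) * N + k) (fun m => (m + 1) * N - k)
      (fun m => by have := hle m; omega)
      (fun m => by have := hle m; omega) α β hα hβ).const_add c
    rw [add_zero] at h
    refine h.congr fun r => ?_
    simp only [hv]
    rw [mul_add, ← mul_assoc, mul_inv_cancel₀ (hk0 k hk r), one_mul]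
  have hsum : Tendsto (fun r : ℕ => a0 / 2 +
      ∑ k ∈ Finset.Icc 1 n, (H r k)⁻¹ * (a k * C r k x + b k * S r k x)) atTop (nhds (T x)) := by
    rw [hT]
    refine Tendsto.const_add _ (tendsto_finsetSum _ fun k hk => ?_)
    have tH : Tendsto (fun r : ℕ => (k : ℝ) ^ (1 + r) * H r k) atTop (nhds 1) := by
      refine (main k hk (fun _ => 1) (fun _ => 1) (by simp) (by simp) 1).congr' ?_
      filter_upwards [eventually_ge_atTop 1] with r hr
      simp only [hH r hr, mul_one]
    have tC : Tendsto (fun r : ℕ => (k : ℝ) ^ (1 + r) * C r k x) atTop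
        (nhds (Real.cos ((k : ℝ) * x))) := by
      refine (main k hk (fun m => Real.cos ((((m + 1) * N + k : ℕ) : ℝ) * x))
        (fun m => Real.cos ((((m + 1) * N - k : ℕ) : ℝ) * x))
        (fun _ => Real.abs_cos_le_one _) (fun _ => Real.abs_cos_le_one _) _).congr' ?_
      filter_upwards [eventually_ge_atTop 1] with r hr
      rw [hC r hr]
    have tS : Tendsto (fun r : ℕ => (k : ℝ) ^ (1 + r) * S r k x) atTop
        (nhds (Real.sin ((k : ℝ) * x))) := by
      refine (main k hk (fun m => Real.sin ((((m + 1) * N + k : ℕ) : ℝ) * x))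
        (fun m => -Real.sin ((((m + 1) * N - k : ℕ) : ℝ) * x))
        (fun _ => Real.abs_sin_le_one _)
        (fun _ => by rw [abs_neg]; exact Real.abs_sin_le_one _) _).congr' ?_
      filter_upwards [eventually_ge_atTop 1] with r hr
      rw [hS r hr]
      simp only [mul_neg, ← sub_eq_add_neg]
    have t := (tH.inv₀ one_ne_zero).mul ((tC.const_mul (a k)).add (tS.const_mul (b k)))
    rw [inv_one, one_mul] at t
    refine t.congr fun r => ?_
    have := hk0 k hk r
    rw [mul_inv]
    field_simp
  refine hsum.congr' ?_
  filter_upwards [eventually_ge_atTop 1] with r hr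
  rw [hST r hr]
end
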